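/- Let E be a directed graph with E^0 finite and K a non-absolute field. Assume E contains an infinite path p and an edge f ∈ E^1 such that s(f) ≠ r(f) = s(p). Then: (i) if char K = 0 and α ∈ K is equal to 2 or transcendental over the prime subfield ℚ, the elements a := 1 + α f^* and b := 1 + α f generate a non-cyclic free subgroup of L_K(E)^×; (ii) if char K = t > 0 and α, β ∈ K are algebraically independent over the prime subfield 𝔽_t, the elements c := a + (β−1) s(f) + (β^{-1}−1) r(f) and d := b + (β−1) s(f) + (β^{-1}−1) r(f) generate a non-cyclic free subgroup of L_K(E)^×. -/

import Mathlib

/-!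
Let `u = s(f)` and `w = r(f)`; these are distinct, so the elements `f`, `f^*`, `u`, `w` satisfy
`f = u f w`, `f^* = w f^* u`, and `1 + α f^* + (b - 1) u + (b' - 1) w`,
`1 + α f + (b - 1) u + (b' - 1) w` are units whenever `b b' = 1` (`LPA.cornerUnit`).

The Leavitt path algebra acts on the space of `K`-valued functions on infinite paths (`LPA.rep`).
The hypotheses provide two distinct infinite paths, `f p` and `p`. Evaluating a function at these two
gives a surjection onto `K²` which intertwines the two units with the matrices
`(b, 0; α, b')` and `(b, α; 0, b')`: on the two values, `f` and `f^*` act as matrix units, and `p` does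
not start with `f` since `s(p) = r(f) ≠ s(f)`. Hence freeness of the matrix pair implies freeness of
the units (`LPA.exists_freePair`).

The matrix pairs are handled by ping-pong on pairs `(x, y)`, comparing the sizes of `x` and `y`
(`freePair_SL`).

* `b = b' = 1`, `α = 2`: over `ℤ` with the absolute value (`freePair_sanov`), then embed `ℤ` in `K`.
* `b = b' = 1`, `α` transcendental: `ℤ[α]` is a polynomial ring, and specializing the variable to `2`
  reduces to the previous case (`freePair_transcendental`).
* `b = β`, `b' = β⁻¹`, with `α`, `β` algebraically independent: `α` is a polynomial variable over
  `k = 𝔽_t(β)`, and the size is the degree on `k[α]` (`freePair_poly`, `freePair_algIndep`).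
-/

noncomputable section
open scoped Classical
universe u

/-- `a` and `b` generate a free group of rank two, i.e. form a non-cyclic free subgroup. -/
def FreePair {G : Type*} [Group G] (a b : G) : Prop :=
  Function.Injective (FreeGroup.lift ![a, b] : FreeGroup (Fin 2) →* G)

/-- A field is absolute (locally finite) if every finite subset generates a finite
subfield over the prime subfield. -/
def IsAbsoluteField (K : Type*) [Field K] : Prop :=
  ∀ S : Finset K, ((Subfield.closure (S : Set K) : Subfield K) : Set K).Finite

/-- `a` is transcendental over the prime subfield of `K`. -/
def TranscendentalOverPrime (K : Type*) [Field K] (a : K) : Prop :=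
  ∀ p : Polynomial ℤ, Polynomial.aeval a p = 0 → p.map (Int.castRingHom K) = 0

/-- `a` and `b` are algebraically independent over the prime subfield of `K`. -/
def AlgIndepOverPrime (K : Type*) [Field K] (a b : K) : Prop :=
  ∀ p : MvPolynomial (Fin 2) ℤ, MvPolynomial.aeval ![a, b] p = 0 →
    MvPolynomial.map (Int.castRingHom K) p = 0

/-- A two-sided ideal is (left) primitive if it is the annihilator of a simple left module. -/
def IsPrimitiveIdeal {R : Type u} [Ring R] (P : TwoSidedIdeal R) : Prop :=
  ∃ (M : Type u) (_ : AddCommGroup M) (_ : Module R M),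
    IsSimpleModule R M ∧ ∀ x : R, x ∈ P ↔ ∀ m : M, x • m = 0

namespace LPA

/-- Generators of Cohn/Leavitt path algebras: vertices, edges and ghost edges. -/
inductive Gen (V : Type*) (E : Type*)
  | vertex : V → Gen V E
  | edge : E → Gen V E
  | ghost : E → Gen V E

section rels

variable (K : Type*) [Field K] {V E : Type*} (s r : E → V)

/-- The defining relations (V), (E1), (E2), (CK1) of the Cohn path algebra of the graph
with vertex set `V`, edge set `E`, source map `s` and range map `r`; together with the
identification of `1` with the sum of all vertices when the vertex set is finite. -/
inductive CohnRel : FreeAlgebra K (Gen V E) → FreeAlgebra K (Gen V E) → Prop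
  | vtx_mul (v w : V) :
      CohnRel (FreeAlgebra.ι K (Gen.vertex v) * FreeAlgebra.ι K (Gen.vertex w))
        (if v = w then FreeAlgebra.ι K (Gen.vertex v) else 0)
  | edge_src (e : E) :
      CohnRel (FreeAlgebra.ι K (Gen.vertex (s e)) * FreeAlgebra.ι K (Gen.edge e))
        (FreeAlgebra.ι K (Gen.edge e))
  | edge_rng (e : E) :
      CohnRel (FreeAlgebra.ι K (Gen.edge e) * FreeAlgebra.ι K (Gen.vertex (r e)))
        (FreeAlgebra.ι K (Gen.edge e))
  | ghost_rng (e : E) :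
      CohnRel (FreeAlgebra.ι K (Gen.vertex (r e)) * FreeAlgebra.ι K (Gen.ghost e))
        (FreeAlgebra.ι K (Gen.ghost e))
  | ghost_src (e : E) :
      CohnRel (FreeAlgebra.ι K (Gen.ghost e) * FreeAlgebra.ι K (Gen.vertex (s e)))
        (FreeAlgebra.ι K (Gen.ghost e))
  | ck1 (e f : E) :
      CohnRel (FreeAlgebra.ι K (Gen.ghost e) * FreeAlgebra.ι K (Gen.edge f))
        (if e = f then FreeAlgebra.ι K (Gen.vertex (r e)) else 0)
  | unit [Fintype V] :
      CohnRel (1 : FreeAlgebra K (Gen V E)) (∑ v : V, FreeAlgebra.ι K (Gen.vertex v))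

/-- The defining relations of the Leavitt path algebra: those of the Cohn path algebra
together with the (CK2) relations at every regular vertex. -/
inductive LeavittRel : FreeAlgebra K (Gen V E) → FreeAlgebra K (Gen V E) → Prop
  | cohn {a b : FreeAlgebra K (Gen V E)} : CohnRel K s r a b → LeavittRel a b
  | ck2 (v : V) (hfin : {e : E | s e = v}.Finite) (hne : {e : E | s e = v}.Nonempty) :
      LeavittRel (FreeAlgebra.ι K (Gen.vertex v))
        (∑ e ∈ hfin.toFinset, FreeAlgebra.ι K (Gen.edge e) * FreeAlgebra.ι K (Gen.ghost e))

/-- The Cohn path algebra of the graph `(V, E, s, r)` with coefficients in `K`. -/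
abbrev CohnPathAlgebra := RingQuot (CohnRel K s r)

/-- The Leavitt path algebra of the graph `(V, E, s, r)` with coefficients in `K`. -/
abbrev LeavittPathAlgebra := RingQuot (LeavittRel K s r)

/-- The image of a vertex in the Leavitt path algebra. -/
def vtx (v : V) : LeavittPathAlgebra K s r :=
  RingQuot.mkAlgHom K (LeavittRel K s r) (FreeAlgebra.ι K (Gen.vertex v))

/-- The image of an edge in the Leavitt path algebra. -/
def edg (e : E) : LeavittPathAlgebra K s r :=
  RingQuot.mkAlgHom K (LeavittRel K s r) (FreeAlgebra.ι K (Gen.edge e))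

/-- The image of a ghost edge in the Leavitt path algebra. -/
def gh (e : E) : LeavittPathAlgebra K s r :=
  RingQuot.mkAlgHom K (LeavittRel K s r) (FreeAlgebra.ι K (Gen.ghost e))

end rels

section graph

variable {V E : Type*}

/-- `u ≥ v` : there is a (finite, possibly trivial) path from `u` to `v`. -/
def Reaches (s r : E → V) (u v : V) : Prop :=
  Relation.ReflTransGen (fun a b => ∃ e : E, s e = a ∧ r e = b) u v

/-- A sink emits no edges. -/
def IsSink (s : E → V) (v : V) : Prop := ∀ e : E, s e ≠ v

/-- An infinite emitter emits infinitely many edges. -/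
def IsInfiniteEmitter (s : E → V) (v : V) : Prop := {e : E | s e = v}.Infinite

/-- A regular vertex is neither a sink nor an infinite emitter. -/
def IsRegular (s : E → V) (v : V) : Prop :=
  (∃ e : E, s e = v) ∧ {e : E | s e = v}.Finite

/-- Hereditary subsets of vertices. -/
def IsHereditary (s r : E → V) (H : Set V) : Prop :=
  ∀ u ∈ H, ∀ v : V, Reaches s r u v → v ∈ H

/-- Saturated subsets of vertices. -/
def IsSaturated (s r : E → V) (H : Set V) : Prop :=
  ∀ v : V, IsRegular s v → (∀ e : E, s e = v → r e ∈ H) → v ∈ H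

/-- A breaking vertex of a hereditary saturated set `H`. -/
def IsBreakingVertex (s r : E → V) (H : Set V) (w : V) : Prop :=
  w ∉ H ∧ IsInfiniteEmitter s w ∧
    {e : E | s e = w ∧ r e ∉ H}.Finite ∧ {e : E | s e = w ∧ r e ∉ H}.Nonempty

/-- An infinite path, as a sequence of composable edges. -/
def IsInfPath (s r : E → V) (p : ℕ → E) : Prop := ∀ i, r (p i) = s (p (i + 1))

/-- Tail equivalence of infinite paths. -/
def TailEquiv (p q : ℕ → E) : Prop := ∃ m n : ℕ, ∀ i, p (m + i) = q (n + i)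

/-- Prepending an edge to an infinite path. -/
def consPath (f : E) (p : ℕ → E) : ℕ → E := fun i =>
  match i with
  | 0 => f
  | (j + 1) => p j

/-- A cycle of length `m`, encoded as the `m`-periodic infinite path obtained by
traversing it repeatedly; the sources of its first `m` edges are pairwise distinct. -/
def IsCycle (s r : E → V) (m : ℕ) (c : ℕ → E) : Prop :=
  0 < m ∧ IsInfPath s r c ∧ (∀ i, c (i + m) = c i) ∧
    ∀ i j, i < m → j < m → s (c i) = s (c j) → i = j

/-- A cycle (as a periodic infinite path) has no exits. -/
def CycleNoExit (s : E → V) (c : ℕ → E) : Prop :=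
  ∀ i, ∀ e : E, s e = s (c i) → e = c i

/-- An exclusive cycle: every cycle based at one of its vertices is a rotation of it. -/
def IsExclusiveCycle (s r : E → V) (m : ℕ) (c : ℕ → E) : Prop :=
  IsCycle s r m c ∧ ∀ (m' : ℕ) (c' : ℕ → E), IsCycle s r m' c' →
    (∃ i, s (c' 0) = s (c i)) → ∃ k, ∀ j, c' j = c (j + k)

/-- `l` is (the list of edges of) a finite path starting at the vertex `v`
(the empty list is the trivial path at `v`). -/
def IsPathFrom (s r : E → V) (v : V) (l : List E) : Prop :=
  l.Chain' (fun e f => r e = s f) ∧ ∀ h : l ≠ [], s (l.head h) = v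

/-- The terminal vertex of a finite path starting at `v`. -/
def pathEnd (r : E → V) (v : V) (l : List E) : V :=
  if h : l ≠ [] then r (l.getLast h) else v

end graph

section elements

variable (K : Type*) [Field K] {V E : Type*} (s r : E → V)

/-- The finite set of edges emitted by a breaking vertex `w` of `H` whose range is
outside `H` (junk value `∅` if that set of edges is infinite). -/
def breakingFinset (H : Set V) (w : V) : Finset E :=
  if h : {e : E | s e = w ∧ r e ∉ H}.Finite then h.toFinset else ∅

/-- The element `w^H = w - ∑_{s(e) = w, r(e) ∉ H} e e^*` of the Leavitt path algebra. -/
def wHElem (H : Set V) (w : V) : LeavittPathAlgebra K s r :=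
  vtx K s r w - ∑ e ∈ breakingFinset s r H w, edg K s r e * gh K s r e

/-- The ideal `I(H, S)` generated by the vertices in `H` and the elements `w^H`, `w ∈ S`. -/
def idealHS (H : Set V) (S : Set V) : TwoSidedIdeal (LeavittPathAlgebra K s r) :=
  TwoSidedIdeal.span ((fun v => vtx K s r v) '' H ∪ (fun w => wHElem K s r H w) '' S)

end elements

end LPA

/-- A (left) primitive ring: a ring admitting a faithful simple left module. -/
def IsPrimitiveRing (R : Type u) [Ring R] : Prop :=
  ∃ (M : Type u) (_ : AddCommGroup M) (_ : Module R M),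
    IsSimpleModule R M ∧ ∀ x : R, (∀ m : M, x • m = 0) → x = 0

namespace LPA

section conc

variable {V E : Type*}

/-- Reachability through paths all of whose vertices beyond the first lie outside `H`,
i.e. reachability in the quotient graph `E ∖ (H, B_H)`. -/
def ReachesOutside (s r : E → V) (H : Set V) (u v : V) : Prop :=
  Relation.ReflTransGen (fun a b => ∃ e : E, s e = a ∧ r e = b ∧ r e ∉ H) u v

variable (K : Type*) [Field K] (s r : E → V)

/-- The standard conclusion: for an edge `f`, in characteristic zero the elements
`a = 1 + α f^*`, `b = 1 + α f` (with `α = 2` or transcendental over the prime field)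
generate a non-cyclic free subgroup of `L_K(E)^×`, and in characteristic `t > 0` the
elements `c = a + (β - 1) s(f) + (β⁻¹ - 1) r(f)`, `d = b + (β - 1) s(f) + (β⁻¹ - 1) r(f)`
(with `α, β` algebraically independent over the prime field) do. -/
def FreeSubgroupFromEdge (f : E) : Prop :=
  ∀ α β : K,
    (CharP K 0 → (α = 2 ∨ TranscendentalOverPrime K α) →
      ∃ ua ub : (LeavittPathAlgebra K s r)ˣ,
        (ua : LeavittPathAlgebra K s r) =
            1 + algebraMap K (LeavittPathAlgebra K s r) α * gh K s r f ∧
        (ub : LeavittPathAlgebra K s r) =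
            1 + algebraMap K (LeavittPathAlgebra K s r) α * edg K s r f ∧
        FreePair ua ub) ∧
    (∀ t : ℕ, 0 < t → CharP K t → AlgIndepOverPrime K α β →
      ∃ uc ud : (LeavittPathAlgebra K s r)ˣ,
        (uc : LeavittPathAlgebra K s r) =
            1 + algebraMap K (LeavittPathAlgebra K s r) α * gh K s r f
              + algebraMap K (LeavittPathAlgebra K s r) (β - 1) * vtx K s r (s f)
              + algebraMap K (LeavittPathAlgebra K s r) (β⁻¹ - 1) * vtx K s r (r f) ∧
        (ud : LeavittPathAlgebra K s r) =
            1 + algebraMap K (LeavittPathAlgebra K s r) α * edg K s r f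
              + algebraMap K (LeavittPathAlgebra K s r) (β - 1) * vtx K s r (s f)
              + algebraMap K (LeavittPathAlgebra K s r) (β⁻¹ - 1) * vtx K s r (r f) ∧
        FreePair uc ud)

end conc

end LPA


/-! ### Free pairs and ping-pong -/

theorem FreePair.of_map {G H : Type*} [Group G] [Group H] (φ : G →* H) {a b : G}
    (h : FreePair (φ a) (φ b)) : FreePair a b := by
  have key : (FreeGroup.lift ![φ a, φ b] : FreeGroup (Fin 2) →* H)
      = φ.comp (FreeGroup.lift ![a, b]) := by
    ext i; fin_cases i <;> simp
  unfold FreePair at h ⊢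
  rw [key, MonoidHom.coe_comp] at h
  exact h.of_comp

theorem FreePair.map {G H : Type*} [Group G] [Group H] (φ : G →* H)
    (hφ : Function.Injective φ) {a b : G}
    (h : FreePair a b) : FreePair (φ a) (φ b) := by
  have key : (FreeGroup.lift ![φ a, φ b] : FreeGroup (Fin 2) →* H)
      = φ.comp (FreeGroup.lift ![a, b]) := by
    ext i; fin_cases i <;> simp
  unfold FreePair at h ⊢
  rw [key, MonoidHom.coe_comp]
  exact hφ.comp h

/-- Ping-pong for the cyclic groups generated by two elements, deduced from the ping-pong lemma for free products
applied to two infinite cyclic factors. -/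
theorem freePair_of_pingPong {G : Type*} {T : Type*} [Group G] [MulAction G T] (a b : G)
    (S₁ S₂ : Set T) (h₁ : S₁.Nonempty) (h₂ : S₂.Nonempty) (hd : Disjoint S₁ S₂)
    (ha : ∀ n : ℤ, n ≠ 0 → ∀ x ∈ S₂, a ^ n • x ∈ S₁)
    (hb : ∀ n : ℤ, n ≠ 0 → ∀ x ∈ S₁, b ^ n • x ∈ S₂) : FreePair a b := by
  have main : Function.Injective (Monoid.CoprodI.lift
      (fun i : Fin 2 => (FreeGroup.lift fun _ : Unit => ![a, b] i : FreeGroup Unit →* G))) := by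
    refine Monoid.CoprodI.lift_injective_of_ping_pong _ (Or.inr ⟨0, ?_⟩) ![S₁, S₂] ?_ ?_ ?_
    · have : Infinite (FreeGroup Unit) := Infinite.of_injective _
        FreeGroup.freeGroupUnitEquivInt.symm.injective
      exact le_trans (Cardinal.natCast_lt_aleph0 (n := 3)).le (Cardinal.aleph0_le_mk _)
    · intro i; fin_cases i <;> simpa
    · intro i j hij
      fin_cases i <;> fin_cases j <;> first | exact absurd rfl hij | skip
      · exact hd
      · exact hd.symm
    · intro i j hij g hg
      obtain ⟨n, rfl⟩ := FreeGroup.freeGroupUnitEquivInt.symm.surjective g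
      have hn : n ≠ 0 := by
        rintro rfl; exact hg rfl
      have e : FreeGroup.freeGroupUnitEquivInt.symm n = FreeGroup.of () ^ n := rfl
      rw [e, map_zpow, FreeGroup.lift_apply_of]
      rintro _ ⟨x, hx, rfl⟩
      fin_cases i <;> fin_cases j <;> first | exact absurd rfl hij | skip
      · exact ha n hn x hx
      · exact hb n hn x hx
  have key : (FreeGroup.lift ![a, b] : FreeGroup (Fin 2) →* G) =
      (Monoid.CoprodI.lift
      (fun i : Fin 2 => (FreeGroup.lift fun _ : Unit => ![a, b] i : FreeGroup Unit →* G))).comp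
        (freeGroupEquivCoprodI (ι := Fin 2)).toMonoidHom := by
    ext i; simp [freeGroupEquivCoprodI]
  unfold FreePair
  rw [key, MonoidHom.coe_comp]
  exact main.comp (freeGroupEquivCoprodI (ι := Fin 2)).injective

/-! ### Powers of triangular matrices of determinant one -/

/-- The lower triangular matrix with diagonal `(b, b')` and off-diagonal entry `x`. -/
def lowSL {R : Type*} [CommRing R] (b b' x : R) (h : b * b' = 1) :
    Matrix.SpecialLinearGroup (Fin 2) R :=
  ⟨!![b, 0; x, b'], by simp [Matrix.det_fin_two, h]⟩

/-- The upper triangular matrix with diagonal `(b, b')` and off-diagonal entry `x`. -/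
def uppSL {R : Type*} [CommRing R] (b b' x : R) (h : b * b' = 1) :
    Matrix.SpecialLinearGroup (Fin 2) R :=
  ⟨!![b, x; 0, b'], by simp [Matrix.det_fin_two, h]⟩

@[simp] theorem coe_lowSL {R : Type*} [CommRing R] (b b' x : R) (h : b * b' = 1) :
    (lowSL b b' x h : Matrix (Fin 2) (Fin 2) R) = !![b, 0; x, b'] := rfl

@[simp] theorem coe_uppSL {R : Type*} [CommRing R] (b b' x : R) (h : b * b' = 1) :
    (uppSL b b' x h : Matrix (Fin 2) (Fin 2) R) = !![b, x; 0, b'] := rfl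

/-- The powers of a lower triangular matrix, described by sequences `p`, `q`, `s` satisfying the
recursion that right multiplication by the matrix imposes. -/
theorem lowSL_zpow {R : Type*} [CommRing R] (p q s : ℤ → R) (x : R) (h : ∀ n, p n * q n = 1)
    (hp0 : p 0 = 1) (hs0 : s 0 = 0) (hq0 : q 0 = 1) (hp : ∀ n, p (n + 1) = p n * p 1)
    (hq : ∀ n, q (n + 1) = q n * q 1) (hs : ∀ n, s (n + 1) = s n * p 1 + q n) (n : ℤ) :
    lowSL (p 1) (q 1) x (h 1) ^ n = lowSL (p n) (q n) (x * s n) (h n) := by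
  have step : ∀ n, lowSL (p (n + 1)) (q (n + 1)) (x * s (n + 1)) (h (n + 1)) =
      lowSL (p n) (q n) (x * s n) (h n) * lowSL (p 1) (q 1) x (h 1) := by
    intro n
    ext i j
    fin_cases i <;> fin_cases j <;>
      simp [Matrix.mul_apply, Fin.sum_univ_two, hp n, hq n, hs n] <;> ring
  induction n using Int.induction_on with
  | zero => ext i j; fin_cases i <;> fin_cases j <;> simp [hp0, hs0, hq0]
  | succ k ih => rw [zpow_add_one, ih, step]
  | pred k ih =>
    have := step (-(k : ℤ) - 1)
    rw [sub_add_cancel] at this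
    rw [zpow_sub_one, ih, this, mul_inv_cancel_right]

/-- The powers of an upper triangular matrix. The recursion for `s` differs from the one in
`lowSL_zpow` because right multiplication uses the two diagonal entries in the other order. -/
theorem uppSL_zpow {R : Type*} [CommRing R] (p q s : ℤ → R) (x : R) (h : ∀ n, p n * q n = 1)
    (hp0 : p 0 = 1) (hs0 : s 0 = 0) (hq0 : q 0 = 1) (hp : ∀ n, p (n + 1) = p n * p 1)
    (hq : ∀ n, q (n + 1) = q n * q 1) (hs : ∀ n, s (n + 1) = p n + s n * q 1) (n : ℤ) :
    uppSL (p 1) (q 1) x (h 1) ^ n = uppSL (p n) (q n) (x * s n) (h n) := by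
  have step : ∀ n, uppSL (p (n + 1)) (q (n + 1)) (x * s (n + 1)) (h (n + 1)) =
      uppSL (p n) (q n) (x * s n) (h n) * uppSL (p 1) (q 1) x (h 1) := by
    intro n
    ext i j
    fin_cases i <;> fin_cases j <;>
      simp [Matrix.mul_apply, Fin.sum_univ_two, hp n, hq n, hs n] <;> ring
  induction n using Int.induction_on with
  | zero => ext i j; fin_cases i <;> fin_cases j <;> simp [hp0, hs0, hq0]
  | succ k ih => rw [zpow_add_one, ih, step]
  | pred k ih =>
    have := step (-(k : ℤ) - 1)
    rw [sub_add_cancel] at this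
    rw [zpow_sub_one, ih, this, mul_inv_cancel_right]

/-- Ping-pong on `R²` with the sets `N x < N y` and `N y < N x`, for a size function `N`: nonzero powers
of the lower (upper) triangular matrix must make the second (first) coordinate the strictly larger one. -/
theorem freePair_SL {R : Type*} [CommRing R] {Γ : Type*} [LinearOrder Γ] (N : R → Γ)
    (hN : N 0 < N 1)
    (p q s : ℤ → R) (x : R) (h : ∀ n, p n * q n = 1)
    (hp0 : p 0 = 1) (hs0 : s 0 = 0) (hq0 : q 0 = 1) (hp : ∀ n, p (n + 1) = p n * p 1)
    (hq : ∀ n, q (n + 1) = q n * q 1) (hs : ∀ n, s (n + 1) = s n * p 1 + q n)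
    (hs' : ∀ n, s (n + 1) = p n + s n * q 1)
    (h1 : ∀ n ≠ 0, ∀ u v, N v < N u → N (p n * u) < N (x * s n * u + q n * v))
    (h2 : ∀ n ≠ 0, ∀ u v, N u < N v → N (q n * v) < N (p n * u + x * s n * v)) :
    FreePair (lowSL (p 1) (q 1) x (h 1)) (uppSL (p 1) (q 1) x (h 1)) := by
  apply FreePair.of_map Matrix.SpecialLinearGroup.toLin'
  refine freePair_of_pingPong (T := Fin 2 → R) _ _ {w | N (w 0) < N (w 1)} {w | N (w 1) < N (w 0)}
    ⟨![0, 1], by simpa⟩ ⟨![1, 0], by simpa⟩ ?_ ?_ ?_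
  · rw [Set.disjoint_left]
    intro w hw hw'
    exact lt_asymm hw hw'
  · intro n hn w hw
    rw [← map_zpow, lowSL_zpow p q s x h hp0 hs0 hq0 hp hq hs]
    have := h1 n hn _ _ hw
    simpa [LinearEquiv.smul_def, Matrix.SpecialLinearGroup.toLin'_apply, Matrix.mulVec,
      dotProduct, Fin.sum_univ_two] using this
  · intro n hn w hw
    rw [← map_zpow, uppSL_zpow p q s x h hp0 hs0 hq0 hp hq hs']
    have := h2 n hn _ _ hw
    simpa [LinearEquiv.smul_def, Matrix.SpecialLinearGroup.toLin'_apply, Matrix.mulVec,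
      dotProduct, Fin.sum_univ_two] using this

theorem freePair_map {R S : Type*} [CommRing R] [CommRing S] (φ : R →+* S)
    (hφ : Function.Injective φ) {b b' x : R} {h : b * b' = 1}
    (hf : FreePair (lowSL b b' x h) (uppSL b b' x h)) {c c' y : S} {h' : c * c' = 1}
    (hc : φ b = c) (hc' : φ b' = c') (hy : φ x = y) :
    FreePair (lowSL c c' y h') (uppSL c c' y h') := by
  subst hc hc' hy
  have := hf.map (Matrix.SpecialLinearGroup.map (n := Fin 2) φ) (by
    intro A B hAB
    ext i j
    apply hφ
    have := congrArg (fun M : Matrix.SpecialLinearGroup (Fin 2) S => M i j) hAB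
    simpa using this)
  convert this using 1 <;>
  · ext i j
    fin_cases i <;> fin_cases j <;> simp

theorem freePair_of_freePair_map {R S : Type*} [CommRing R] [CommRing S] (φ : R →+* S)
    {b b' x : R} {h : b * b' = 1}
    {c c' y : S} {h' : c * c' = 1} (hf : FreePair (lowSL c c' y h') (uppSL c c' y h'))
    (hc : φ b = c) (hc' : φ b' = c') (hy : φ x = y) :
    FreePair (lowSL b b' x h) (uppSL b b' x h) := by
  subst hc hc' hy
  apply FreePair.of_map (Matrix.SpecialLinearGroup.map (n := Fin 2) φ)
  convert hf using 1 <;>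
  · ext i j
    fin_cases i <;> fin_cases j <;> simp

/-- Sanov's theorem: ping-pong with the absolute value on `ℤ`. -/
theorem freePair_sanov : FreePair (lowSL (1 : ℤ) 1 2 (by norm_num)) (uppSL 1 1 2 (by norm_num)) := by
  have aux : ∀ n : ℤ, n ≠ 0 → ∀ u v : ℤ, |v| < |u| → |u| < |2 * n * u + v| := by
    intro n hn u v huv
    have h1 : 1 ≤ |n| := Int.one_le_abs hn
    have h2 : 2 * |n| * |u| ≤ |2 * n * u + v| + |v| := by
      have := abs_sub_abs_le_abs_sub (2 * n * u) (-v)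
      rw [abs_neg, sub_neg_eq_add, abs_mul, abs_mul, abs_two] at this
      linarith
    nlinarith [abs_nonneg u]
  refine freePair_SL (fun z : ℤ => |z|) (by norm_num) (fun _ => 1) (fun _ => 1) (fun n => n) 2
    (by simp) rfl rfl rfl (by simp) (by simp) (by simp) (by intro n; ring) ?_ ?_
  · intro n hn u v huv
    simpa using aux n hn u v huv
  · intro n hn u v huv
    simpa [add_comm] using aux n hn v u huv

open Polynomial in
/-- Ping-pong with the degree on `k[X]`. The off-diagonal entry of the `n`-th power is
`X (u ^ n - u ^ (-n)) / (u - u⁻¹)`, of degree one for `n ≠ 0` because `u` is not a root of unity,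
while the diagonal entries have degree zero. -/
theorem freePair_poly {k : Type*} [Field k] (u : k) (hu0 : u ≠ 0)
    (hu : ∀ n : ℕ, 0 < n → u ^ n ≠ 1) :
    FreePair (lowSL (C u) (C u⁻¹) X (by rw [← C_mul, mul_inv_cancel₀ hu0, C_1]))
      (uppSL (C u) (C u⁻¹) (X : k[X]) (by rw [← C_mul, mul_inv_cancel₀ hu0, C_1])) := by
  have hd : u - u⁻¹ ≠ 0 := by
    intro h
    apply hu 2 (by norm_num)
    have : u = u⁻¹ := sub_eq_zero.mp h
    rw [pow_two]
    nth_rewrite 2 [this]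
    exact mul_inv_cancel₀ hu0
  have hz : ∀ n : ℤ, n ≠ 0 → u ^ n - u ^ (-n) ≠ 0 := by
    intro n hn h
    have h2 : u ^ (2 * n) = 1 := by
      rw [two_mul, zpow_add₀ hu0]
      nth_rewrite 1 [sub_eq_zero.mp h]
      rw [← zpow_add₀ hu0]; simp
    rcases Int.natAbs_eq (2 * n) with h3 | h3
    · apply hu (2 * n).natAbs (by omega)
      rw [← zpow_natCast, ← h3, h2]
    · apply hu (2 * n).natAbs (by omega)
      rw [← zpow_natCast, ← neg_neg (((2 * n).natAbs : ℕ) : ℤ), ← h3, zpow_neg, h2, inv_one]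
  have aux : ∀ a b c : k, a ≠ 0 → b ≠ 0 → c ≠ 0 → ∀ P Q : k[X], Q.degree < P.degree →
      (C a * P).degree < (X * C b * P + C c * Q).degree := by
    intro a b c ha hb hc P Q hPQ
    have hP : P ≠ 0 := by rintro rfl; simp at hPQ
    have e1 : (X * C b * P).degree = P.degree + 1 := by
      rw [degree_mul, degree_mul, degree_X, degree_C hb, add_zero, add_comm]
    have hlt : P.degree < P.degree + 1 := by
      rw [degree_eq_natDegree hP]; exact_mod_cast Nat.lt_succ_self _
    have e2 : (C c * Q).degree < (X * C b * P).degree := by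
      rw [e1, degree_mul, degree_C hc, zero_add]; exact hPQ.trans hlt
    rw [degree_add_eq_left_of_degree_lt e2, e1, degree_mul, degree_C ha, zero_add]
    exact hlt
  have main := freePair_SL (R := k[X]) degree (by simp) (fun n => C (u ^ n))
    (fun n => C (u ^ (-n))) (fun n => C ((u ^ n - u ^ (-n)) / (u - u⁻¹))) X
    (by intro n; rw [← C_mul, ← zpow_add₀ hu0]; simp) (by simp) (by simp) (by simp)
    (by intro n; simp only [← C_mul, zpow_add₀ hu0])
    (by intro n; simp only [← C_mul, ← zpow_add₀ hu0, neg_add])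
    (by
      intro n
      simp only [← C_mul, ← C_add]
      congr 1
      rw [div_mul_eq_mul_div, div_add' _ _ _ hd, neg_add, zpow_add₀ hu0, zpow_add₀ hu0]
      congr 1
      simp only [zpow_neg, zpow_one]
      ring)
    (by
      intro n
      simp only [← C_mul, ← C_add]
      congr 1
      rw [div_mul_eq_mul_div, add_div' _ _ _ hd, neg_add, zpow_add₀ hu0, zpow_add₀ hu0]
      congr 1
      simp only [zpow_neg, zpow_one]
      ring)
    (by
      intro n hn P Q hPQ
      exact aux _ _ _ (zpow_ne_zero _ hu0) (div_ne_zero (hz n hn) hd) (zpow_ne_zero _ hu0) P Q hPQ)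
    (by
      intro n hn P Q hPQ
      rw [add_comm]
      exact aux _ _ _ (zpow_ne_zero _ hu0) (div_ne_zero (hz n hn) hd) (zpow_ne_zero _ hu0) Q P hPQ)
  simpa using main


/-! ### Free pairs of triangular matrices over fields -/

theorem freePair_two (K : Type*) [Field K] [CharZero K] :
    FreePair (lowSL (1 : K) 1 2 (one_mul 1)) (uppSL (1 : K) 1 2 (one_mul 1)) :=
  freePair_map (Int.castRingHom K) Int.cast_injective freePair_sanov (by simp) (by simp) (by simp)

open Polynomial in
/-- Since `α` is transcendental, `ℤ[X] → K`, `X ↦ α`, is injective, so it suffices to treat the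
matrices over `ℤ[X]`; specializing `X` to `2` reduces these to Sanov's pair. -/
theorem freePair_transcendental {K : Type*} [Field K] [CharZero K] {α : K}
    (hα : TranscendentalOverPrime K α) :
    FreePair (lowSL (1 : K) 1 α (one_mul 1)) (uppSL (1 : K) 1 α (one_mul 1)) := by
  have h1 : FreePair (lowSL (1 : ℤ[X]) 1 X (one_mul 1)) (uppSL (1 : ℤ[X]) 1 X (one_mul 1)) :=
    freePair_of_freePair_map (evalRingHom (2 : ℤ)) freePair_sanov (by simp) (by simp) (by simp)
  refine freePair_map (aeval α : ℤ[X] →ₐ[ℤ] K).toRingHom ?_ h1 (by simp) (by simp) (by simp)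
  rw [injective_iff_map_eq_zero]
  intro P hP
  exact (Polynomial.map_eq_zero_iff (RingHom.injective_int _)).mp (hα P hP)

open IntermediateField in
/-- Over the field `k = 𝔽_t(β)` the element `α` is transcendental and `β` is not a root of unity,
so `k[X] → K`, `X ↦ α`, transports the pair of `freePair_poly`. -/
theorem freePair_algIndep {K : Type*} [Field K] {t : ℕ} (ht : 0 < t) [CharP K t] {α β : K}
    (h : AlgIndepOverPrime K α β) (hβ : β * β⁻¹ = 1) :
    FreePair (lowSL β β⁻¹ α hβ) (uppSL β β⁻¹ α hβ) := by
  have : Fact t.Prime := ⟨(CharP.char_is_prime_or_zero K t).resolve_right ht.ne'⟩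
  let _ : Algebra (ZMod t) K := ZMod.algebra K t
  have hind : AlgebraicIndependent (ZMod t) ![α, β] := by
    rw [algebraicIndependent_iff]
    intro P hP
    obtain ⟨Q, rfl⟩ := MvPolynomial.map_surjective (Int.castRingHom (ZMod t))
      ZMod.intCast_surjective P
    have h1 := h Q (by
      rw [← hP, MvPolynomial.aeval_def, MvPolynomial.aeval_def, MvPolynomial.eval₂_map]
      congr 1
      exact RingHom.ext_int _ _)
    apply MvPolynomial.map_injective (algebraMap (ZMod t) K) (algebraMap (ZMod t) K).injective
    have e : (algebraMap (ZMod t) K).comp (Int.castRingHom (ZMod t)) = Int.castRingHom K :=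
      RingHom.ext_int _ _
    rw [MvPolynomial.map_map, e, h1, map_zero]
  -- Algebraic independence passes to the fraction field of the subring generated by `β`.
  have hα : Transcendental (adjoin (ZMod t) {β}) α := by
    rw [transcendental_adjoin_iff]
    have h1 := hind.transcendental_adjoin (s := {1}) (i := 0) (by simp)
    rwa [show ![α, β] '' {1} = {β} by simp] at h1
  have hroot : ∀ n : ℕ, 0 < n → β ^ n ≠ 1 := by
    intro n hn hb
    have h1 := h (MvPolynomial.X 1 ^ n - 1) (by simp [hb])
    -- The polynomial `X₁ ^ n - 1` is nonzero over `K`: its constant term is `-1`.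
    have h2 := congrArg (MvPolynomial.eval (0 : Fin 2 → K)) h1
    simp [hn.ne'] at h2
  have main := freePair_poly (k := adjoin (ZMod t) {β})
    ⟨β, mem_adjoin_simple_self _ β⟩
    (by
      intro h0
      have : β = 0 := congrArg Subtype.val h0
      simp [this] at hβ)
    (by
      intro n hn h0
      exact hroot n hn (by simpa using congrArg Subtype.val h0))
  refine freePair_map (Polynomial.aeval α :
    Polynomial (adjoin (ZMod t) {β}) →ₐ[adjoin (ZMod t) {β}] K).toRingHom ?_ main ?_ ?_ ?_
  · exact transcendental_iff_injective.mp hα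
  · simp [IntermediateField.algebraMap_apply]
  · simp [IntermediateField.algebraMap_apply]
  · simp

/-! ### The representation on functions on infinite paths -/

namespace LPA

section rep

variable {V E : Type*} (s r : E → V)

/-- The infinite paths of the graph `(V, E, s, r)`. -/
def InfPath : Type _ := {q : ℕ → E // IsInfPath s r q}

variable {s r}

/-- The infinite path obtained by deleting the first edge. -/
def InfPath.tail (q : InfPath s r) : InfPath s r := ⟨fun i => q.1 (i + 1), fun i => q.2 (i + 1)⟩

/-- The infinite path obtained by prepending an edge. -/
def InfPath.cons (e : E) (q : InfPath s r) (h : r e = s (q.1 0)) : InfPath s r :=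
  ⟨consPath e q.1, fun i => match i with
    | 0 => h
    | (j + 1) => q.2 j⟩

@[simp] theorem InfPath.cons_zero (e : E) (q : InfPath s r) (h : r e = s (q.1 0)) :
    (q.cons e h).1 0 = e := rfl

@[simp] theorem InfPath.tail_cons (e : E) (q : InfPath s r) (h : r e = s (q.1 0)) :
    (q.cons e h).tail = q := rfl

@[simp] theorem InfPath.tail_zero (q : InfPath s r) : q.tail.1 0 = q.1 1 := rfl

theorem InfPath.cons_tail (q : InfPath s r) {e : E} (h : r e = s (q.tail.1 0)) (he : q.1 0 = e) :
    q.tail.cons e h = q := by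
  subst he
  apply Subtype.ext
  funext i
  cases i <;> rfl

variable (K : Type*) [Field K] (s r)

/-- The action of the generators on functions `φ` on the set of infinite paths: a vertex `v`
restricts `φ` to the paths starting at `v`, an edge `e` sends `φ` to the function supported on the
paths `e q` with value `φ q` there, and the ghost edge of `e` sends `φ` to `q ↦ φ (e q)`, taken to
be `0` where `e q` is not a path. -/
def repGen : Gen V E → Module.End K (InfPath s r → K)
  | .vertex v =>
    { toFun := fun φ q => if s (q.1 0) = v then φ q else 0
      map_add' := by intro φ ψ; ext q; simp only [Pi.add_apply]; split_ifs <;> simp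
      map_smul' := by intro c φ; ext q; simp }
  | .edge e =>
    { toFun := fun φ q => if q.1 0 = e then φ q.tail else 0
      map_add' := by intro φ ψ; ext q; simp only [Pi.add_apply]; split_ifs <;> simp
      map_smul' := by intro c φ; ext q; simp }
  | .ghost e =>
    { toFun := fun φ q => if h : r e = s (q.1 0) then φ (q.cons e h) else 0
      map_add' := by intro φ ψ; ext q; simp only [Pi.add_apply]; split_ifs <;> simp
      map_smul' := by intro c φ; ext q; simp }

theorem repGen_vertex (v : V) (φ : InfPath s r → K) (q : InfPath s r) :
    repGen s r K (.vertex v) φ q = if s (q.1 0) = v then φ q else 0 := rfl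

theorem repGen_edge (e : E) (φ : InfPath s r → K) (q : InfPath s r) :
    repGen s r K (.edge e) φ q = if q.1 0 = e then φ q.tail else 0 := rfl

theorem repGen_ghost (e : E) (φ : InfPath s r → K) (q : InfPath s r) :
    repGen s r K (.ghost e) φ q = if h : r e = s (q.1 0) then φ (q.cons e h) else 0 := rfl

theorem repGen_edge_ghost (e : E) (φ : InfPath s r → K) (q : InfPath s r) :
    repGen s r K (.edge e) (repGen s r K (.ghost e) φ) q = if q.1 0 = e then φ q else 0 := by
  rw [repGen_edge, repGen_ghost]
  split_ifs with h1 h2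
  · rw [InfPath.cons_tail q h2 h1]
  · subst h1
    exact absurd (q.2 0) h2
  · rfl

theorem rep_cohn ⦃x y : FreeAlgebra K (Gen V E)⦄ (h : CohnRel K s r x y) :
    FreeAlgebra.lift K (repGen s r K) x = FreeAlgebra.lift K (repGen s r K) y := by
  cases h with
  | vtx_mul v w =>
    rw [map_mul]
    ext φ q
    split_ifs with hvw
    · simp only [FreeAlgebra.lift_ι_apply, Module.End.mul_apply, repGen_vertex]
      split_ifs <;> simp_all
    · simp only [FreeAlgebra.lift_ι_apply, Module.End.mul_apply, repGen_vertex, map_zero]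
      split_ifs <;> simp_all
  | edge_src e =>
    rw [map_mul]
    ext φ q
    simp only [FreeAlgebra.lift_ι_apply, Module.End.mul_apply, repGen_vertex, repGen_edge]
    split_ifs <;> simp_all
  | edge_rng e =>
    rw [map_mul]
    ext φ q
    simp only [FreeAlgebra.lift_ι_apply, Module.End.mul_apply, repGen_vertex, repGen_edge]
    split_ifs with h1 h2
    · rfl
    · subst h1
      exact absurd (q.2 0).symm h2
    · rfl
  | ghost_rng e =>
    rw [map_mul]
    ext φ q
    simp only [FreeAlgebra.lift_ι_apply, Module.End.mul_apply, repGen_vertex, repGen_ghost]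
    split_ifs <;> simp_all
  | ghost_src e =>
    rw [map_mul]
    ext φ q
    simp only [FreeAlgebra.lift_ι_apply, Module.End.mul_apply, repGen_vertex, repGen_ghost]
    split_ifs <;> simp_all
  | ck1 e g =>
    rw [map_mul]
    ext φ q
    split_ifs with hvw
    · subst hvw
      simp only [FreeAlgebra.lift_ι_apply, Module.End.mul_apply, repGen_vertex, repGen_ghost,
        repGen_edge]
      split_ifs <;> simp_all
    · simp only [FreeAlgebra.lift_ι_apply, Module.End.mul_apply, repGen_edge, repGen_ghost,
        map_zero]
      split_ifs <;> simp_all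
  | unit =>
    rw [map_one, map_sum]
    ext φ q
    simp [LinearMap.sum_apply, Finset.sum_apply, repGen_vertex]

theorem rep_leavitt ⦃x y : FreeAlgebra K (Gen V E)⦄ (h : LeavittRel K s r x y) :
    FreeAlgebra.lift K (repGen s r K) x = FreeAlgebra.lift K (repGen s r K) y := by
  cases h with
  | cohn h => exact rep_cohn s r K h
  | ck2 v hfin hne =>
    rw [map_sum]
    ext φ q
    simp only [map_mul, FreeAlgebra.lift_ι_apply, LinearMap.sum_apply, Finset.sum_apply,
      Module.End.mul_apply, repGen_edge_ghost, repGen_vertex]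
    simp

/-- The representation of the Leavitt path algebra on functions on infinite paths. It is the
function-space analogue of the direct sum of the Chen modules, and contains that sum as the finitely
supported functions. -/
def rep : LeavittPathAlgebra K s r →ₐ[K] Module.End K (InfPath s r → K) :=
  RingQuot.liftAlgHom K ⟨FreeAlgebra.lift K (repGen s r K), rep_leavitt s r K⟩

@[simp] theorem rep_vtx (v : V) : rep s r K (vtx K s r v) = repGen s r K (.vertex v) := by
  simp [rep, vtx]

@[simp] theorem rep_edg (e : E) : rep s r K (edg K s r e) = repGen s r K (.edge e) := by
  simp [rep, edg]

@[simp] theorem rep_gh (e : E) : rep s r K (gh K s r e) = repGen s r K (.ghost e) := by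
  simp [rep, gh]

end rep

/-! ### The units attached to an edge -/

section units

variable (K : Type*) [Field K] {V E : Type*} (s r : E → V)

/-- The relations of the Cohn path algebra hold in the Leavitt path algebra. -/
theorem rel_cohn {x y : FreeAlgebra K (Gen V E)} (h : CohnRel K s r x y) :
    RingQuot.mkAlgHom K (LeavittRel K s r) x = RingQuot.mkAlgHom K (LeavittRel K s r) y :=
  RingQuot.mkAlgHom_rel K (.cohn h)

theorem vtx_mul_self (v : V) : vtx K s r v * vtx K s r v = vtx K s r v := by
  have h := rel_cohn K s r (.vtx_mul v v)
  rwa [map_mul, if_pos rfl] at h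

theorem vtx_mul_ne {v w : V} (hvw : v ≠ w) : vtx K s r v * vtx K s r w = 0 := by
  have h := rel_cohn K s r (.vtx_mul v w)
  rwa [map_mul, if_neg hvw, map_zero] at h

theorem src_mul_edg (e : E) : vtx K s r (s e) * edg K s r e = edg K s r e := by
  have h := rel_cohn K s r (.edge_src e)
  rwa [map_mul] at h

theorem edg_mul_rng (e : E) : edg K s r e * vtx K s r (r e) = edg K s r e := by
  have h := rel_cohn K s r (.edge_rng e)
  rwa [map_mul] at h

theorem rng_mul_gh (e : E) : vtx K s r (r e) * gh K s r e = gh K s r e := by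
  have h := rel_cohn K s r (.ghost_rng e)
  rwa [map_mul] at h

theorem gh_mul_src (e : E) : gh K s r e * vtx K s r (s e) = gh K s r e := by
  have h := rel_cohn K s r (.ghost_src e)
  rwa [map_mul] at h

/-- For orthogonal idempotents `v`, `w` and `x = v x w`, the element
`1 + α x + (b - 1) v + (b' - 1) w` acts in the corner of `v + w` as an upper triangular matrix with
diagonal `(b, b')`; its inverse is the expected one when `b b' = 1`. -/
theorem corner_mul {A : Type*} [Ring A] [Algebra K A] {v w x : A} (hv : v * v = v) (hw : w * w = w)
    (hvw : v * w = 0) (hwv : w * v = 0) (h1 : v * x = x) (h2 : x * w = x) (α b b' : K)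
    (hb : b * b' = 1) :
    (1 + α • x + (b - 1) • v + (b' - 1) • w) * (1 + (-α) • x + (b' - 1) • v + (b - 1) • w) = 1 := by
  have h3 : w * x = 0 := by rw [← h1, ← mul_assoc, hwv, zero_mul]
  have h4 : x * v = 0 := by rw [← h2, mul_assoc, hwv, mul_zero]
  have h5 : x * x = 0 := by nth_rewrite 1 [← h2]; rw [mul_assoc, h3, mul_zero]
  simp only [mul_add, add_mul, smul_mul_assoc, mul_smul_comm, hv, hw, hvw, hwv, h1, h2, h3, h4, h5,
    one_mul, mul_one, smul_zero, add_zero]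
  match_scalars <;> first | ring1 | linear_combination hb

/-- The unit `1 + α x + (b - 1) v + (b' - 1) w`, for orthogonal idempotents `v`, `w`,
`x = v x w` and `b b' = 1`. -/
def cornerUnit {A : Type*} [Ring A] [Algebra K A] {v w x : A} (hv : v * v = v) (hw : w * w = w)
    (hvw : v * w = 0) (hwv : w * v = 0) (h1 : v * x = x) (h2 : x * w = x) (α b b' : K)
    (hb : b * b' = 1) : Aˣ where
  val := 1 + α • x + (b - 1) • v + (b' - 1) • w
  inv := 1 + (-α) • x + (b' - 1) • v + (b - 1) • w
  val_inv := corner_mul K hv hw hvw hwv h1 h2 α b b' hb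
  inv_val := by
    simpa using corner_mul K hv hw hvw hwv h1 h2 (-α) b' b (by rw [mul_comm, hb])

end units

/-! ### Transfer of freeness to the Leavitt path algebra -/

section main

variable {K : Type*} [Field K] {V E : Type*} {s r : E → V}

/-- The vector of values of a function on infinite paths at `q₀` and `q₁`. -/
def ev (q₀ q₁ : InfPath s r) (φ : InfPath s r → K) : Fin 2 → K := ![φ q₀, φ q₁]

/-- If evaluation at two distinct infinite paths intertwines the action of two units on functions
with two matrices generating a free group, the units generate a free group: evaluation is onto `K²`,
so a word trivial in the units is trivial in the matrices. -/
theorem freePair_of_intertwine (q₀ q₁ : InfPath s r) (hq : q₀ ≠ q₁)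
    (ua ub : (LeavittPathAlgebra K s r)ˣ) (A B : Matrix.SpecialLinearGroup (Fin 2) K)
    (hA : ∀ φ, ev q₀ q₁ (rep s r K ua φ) = A.1.mulVec (ev q₀ q₁ φ))
    (hB : ∀ φ, ev q₀ q₁ (rep s r K ub φ) = B.1.mulVec (ev q₀ q₁ φ))
    (h : FreePair A B) : FreePair ua ub := by
  have key : ∀ g : FreeGroup (Fin 2), ∀ φ,
      ev q₀ q₁ (rep s r K (FreeGroup.lift ![ua, ub] g : (LeavittPathAlgebra K s r)ˣ) φ) =
        (FreeGroup.lift ![A, B] g).1.mulVec (ev q₀ q₁ φ) := by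
    intro g
    induction g using FreeGroup.induction_on with
    | C1 => intro φ; simp
    | of i => intro φ; fin_cases i <;> simp [hA, hB]
    | inv_of i ih =>
      intro φ
      rw [map_inv, map_inv]
      generalize FreeGroup.lift ![ua, ub] (FreeGroup.of i) = u at ih
      generalize FreeGroup.lift ![A, B] (FreeGroup.of i) = M at ih
      have h1 := ih (rep s r K (u⁻¹ : (LeavittPathAlgebra K s r)ˣ) φ)
      rw [← Module.End.mul_apply, ← map_mul, Units.mul_inv, map_one, Module.End.one_apply] at h1
      rw [h1, Matrix.mulVec_mulVec, ← Matrix.SpecialLinearGroup.coe_mul, inv_mul_cancel,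
        Matrix.SpecialLinearGroup.coe_one, Matrix.one_mulVec]
    | mul x y hx hy =>
      intro φ
      rw [map_mul, map_mul, Units.val_mul, map_mul, Module.End.mul_apply, hx, hy,
        Matrix.mulVec_mulVec, ← Matrix.SpecialLinearGroup.coe_mul]
  unfold FreePair at h ⊢
  rw [injective_iff_map_eq_one] at h ⊢
  intro g hg
  apply h g
  have hev : ∀ w : Fin 2 → K, ∃ φ, ev q₀ q₁ φ = w := by
    intro w
    refine ⟨fun q => if q = q₀ then w 0 else w 1, ?_⟩
    ext i
    fin_cases i
    · simp [ev]
    · simp [ev, hq.symm]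
  apply Matrix.SpecialLinearGroup.toLin'_injective
  rw [map_one]
  ext1 w
  obtain ⟨φ, rfl⟩ := hev w
  rw [Matrix.SpecialLinearGroup.toLin'_apply, Matrix.toLin'_apply, ← key g φ, hg]
  simp

/-- Freeness of the matrix pair with diagonal `(b, b')` and off-diagonal entry `α` transfers to the
corresponding elements of the Leavitt path algebra. Case (i) uses `b = b' = 1`, case (ii)
`b = β`, `b' = β⁻¹`. -/
theorem exists_freePair (p : ℕ → E) (hp : IsInfPath s r p) (f : E) (hf1 : s f ≠ r f)
    (hf2 : r f = s (p 0)) (α b b' : K) (hb : b * b' = 1)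
    (hfree : FreePair (lowSL b b' α hb) (uppSL b b' α hb)) :
    ∃ uc ud : (LeavittPathAlgebra K s r)ˣ,
      (uc : LeavittPathAlgebra K s r) =
          1 + algebraMap K (LeavittPathAlgebra K s r) α * gh K s r f
            + algebraMap K (LeavittPathAlgebra K s r) (b - 1) * vtx K s r (s f)
            + algebraMap K (LeavittPathAlgebra K s r) (b' - 1) * vtx K s r (r f) ∧
      (ud : LeavittPathAlgebra K s r) =
          1 + algebraMap K (LeavittPathAlgebra K s r) α * edg K s r f
            + algebraMap K (LeavittPathAlgebra K s r) (b - 1) * vtx K s r (s f)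
            + algebraMap K (LeavittPathAlgebra K s r) (b' - 1) * vtx K s r (r f) ∧
      FreePair uc ud := by
  -- For the ghost edge the roles of `s f` and `r f` are exchanged, since `f^* = r(f) f^* s(f)`.
  let uc := cornerUnit K (vtx_mul_self K s r (r f)) (vtx_mul_self K s r (s f))
    (vtx_mul_ne K s r hf1.symm) (vtx_mul_ne K s r hf1) (rng_mul_gh K s r f) (gh_mul_src K s r f)
    α b' b (by rw [mul_comm, hb])
  let ud := cornerUnit K (vtx_mul_self K s r (s f)) (vtx_mul_self K s r (r f))
    (vtx_mul_ne K s r hf1) (vtx_mul_ne K s r hf1.symm) (src_mul_edg K s r f) (edg_mul_rng K s r f)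
    α b b' hb
  have hc : (uc : LeavittPathAlgebra K s r) = 1 + α • gh K s r f + (b' - 1) • vtx K s r (r f) +
    (b - 1) • vtx K s r (s f) := rfl
  have hd : (ud : LeavittPathAlgebra K s r) = 1 + α • edg K s r f + (b - 1) • vtx K s r (s f) +
    (b' - 1) • vtx K s r (r f) := rfl
  refine ⟨uc, ud, ?_, ?_, ?_⟩
  · rw [hc, add_right_comm]; simp only [Algebra.smul_def]
  · rw [hd]; simp only [Algebra.smul_def]
  -- So no infinite path `q` has `p = f q`.
  have hpf : p 0 ≠ f := by
    intro h
    exact hf1 (by rw [hf2, h])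
  let q₁ : InfPath s r := ⟨p, hp⟩
  have hq₁ : q₁.1 0 = p 0 := rfl
  let q₀ : InfPath s r := q₁.cons f hf2
  have hq₀ : q₀.1 0 = f := rfl
  have ht : q₀.tail = q₁ := rfl
  refine freePair_of_intertwine q₀ q₁ ?_ uc ud _ _ ?_ ?_ hfree
  · intro h
    exact hpf (by rw [← hq₁, ← h, hq₀])
  · intro φ
    rw [hc, coe_lowSL]
    ext i
    fin_cases i
    · simp [ev, repGen_vertex, repGen_ghost, hq₀, hf1, hf1.symm, Matrix.mulVec, dotProduct]
      ring
    · simp [ev, repGen_vertex, repGen_ghost, hq₁, ← hf2, hf1.symm, Matrix.mulVec, dotProduct]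
      ring
  · intro φ
    rw [hd, coe_uppSL]
    ext i
    fin_cases i
    · simp [ev, repGen_vertex, repGen_edge, hq₀, ht, hf1, Matrix.mulVec, dotProduct]
      ring
    · simp [ev, repGen_vertex, repGen_edge, hq₁, ← hf2, hpf, hf1.symm, Matrix.mulVec,
        dotProduct]
      ring

end main

end LPA

/-- an infinite path `p` and an edge `f` with `s(f) ≠ r(f) = s(p)` produce
non-cyclic free subgroups of units of the Leavitt path algebra. -/
theorem stmt12 (K V E : Type*) [Field K] [Fintype V] (s r : E → V)
    (hK : ¬ IsAbsoluteField K)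
    (p : ℕ → E) (hp : LPA.IsInfPath s r p)
    (f : E) (hf1 : s f ≠ r f) (hf2 : r f = s (p 0)) :
    LPA.FreeSubgroupFromEdge K s r f := by
  intro α β
  refine ⟨fun hchar hα => ?_, fun t ht hchar hαβ => ?_⟩
  · have : CharZero K := CharP.charP_to_charZero K
    have hfree : FreePair (lowSL (1 : K) 1 α (one_mul 1)) (uppSL (1 : K) 1 α (one_mul 1)) := by
      rcases hα with rfl | hα
      · exact freePair_two K
      · exact freePair_transcendental hα
    obtain ⟨ua, ub, ha, hb, h⟩ := LPA.exists_freePair p hp f hf1 hf2 α 1 1 (one_mul 1) hfree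
    exact ⟨ua, ub, by simpa using ha, by simpa using hb, h⟩
  · have hβ0 : β ≠ 0 := by
      rintro rfl
      have h1 := hαβ (MvPolynomial.X 1) (by simp)
      simp at h1
    exact LPA.exists_freePair p hp f hf1 hf2 α β β⁻¹ (mul_inv_cancel₀ hβ0)
      (freePair_algIndep ht hαβ (mul_inv_cancel₀ hβ0))
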